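/- arXiv:math/0608037 — 3 statements merged into one kernel-verified Lean document; each statement's English description precedes it below -/
import Mathlib

section
/- (Hopf boundary point lemma for parabolic systems.) Assume the setting below, together with Requirement 1 and Requirement 2. If the value f(t,x) lies outside of W for some (t,x) ∈ (0,T] × M, then there exists a maximal distance pair (t₀,x₀) ∈ (0,T) × ∂M such that ⟨λ(f(t₀,x₀)), D_x f(t₀,x₀)[ν(x₀)]⟩ > 0, where D_x f(t₀,x₀)[ν(x₀)] denotes the spatial derivative (taken within M) of the map y ↦ f(t₀,y) at x₀ applied to the vector ν(x₀), and λ(v) = v − ω(v) with ω(v) the metric projection of v onto W. -/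
open scoped RealInnerProductSpace

/-- `lam` is a supporting vector for `W` at `ω`: it is a unit vector with
`⟪lam, σ⟫ ≤ ⟪lam, ω⟫` for all `σ ∈ W`. -/
def IsSupportingVector {m : ℕ} (W : Set (EuclideanSpace ℝ (Fin m)))
    (ω lam : EuclideanSpace ℝ (Fin m)) : Prop :=
  ‖lam‖ = 1 ∧ ∀ σ ∈ W, ⟪lam, σ⟫ ≤ ⟪lam, ω⟫

open Filter Metric Set Topology

/-!
Maximize `exp (-K t) * dist_W (f t x)` for a constant `K` larger than a Lipschitz constant `C` of
`φ`, say at `(t₀, x₀)`, and let `w` be the projection of `f t₀ x₀` onto `W`. The vector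
`l = f t₀ x₀ - w` is an outer normal of `W` at `w`, so `⟪l, · - w⟫` is at most `‖l‖ * dist_W` on the
whole space, with equality at `f t₀ x₀`. Hence the scalar function `y ↦ ⟪l, f t₀ y⟫` is maximal at
`x₀`, while `∂ₜ ⟪l, f⟫ ≥ K ‖l‖²` there. Comparing `φ` at `f t₀ x₀` and at `w` gives
`⟪l, φ⟫ ≤ C ‖l‖²`, so the elliptic part of the equation must be positive in the direction `l`.

This is impossible if the maximum of `⟪l, f t₀ ·⟫` is critical with nonpositive Hessian, as it is at
an interior point. At a boundary point with nonpositive normal derivative it is so as well: the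
maximum condition on all inward segments makes the first derivative nonpositive on a half-space and
at its outer normal, hence zero, and the second-order condition then extends from the inward
directions to all directions, since the Hessian is an even continuous function of the direction.
-/

section SecondOrderConditions

theorem nonneg_of_hasDerivWithinAt_of_isLocalMaxOn_Icc_right {g : ℝ → ℝ} {a b c : ℝ}
    (hab : a < b) (hg : HasDerivWithinAt g c (Icc a b) b) (hmax : IsLocalMaxOn g (Icc a b) b) :
    0 ≤ c := by
  have hdir : a - b ∈ posTangentConeAt (Icc a b) b :=
    sub_mem_posTangentConeAt_of_segment_subset (by rw [segment_symm, segment_eq_Icc hab.le])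
  have h : (a - b) * c ≤ 0 := by
    simpa using hmax.hasFDerivWithinAt_nonpos hg.hasFDerivWithinAt hdir
  exact nonneg_of_mul_nonpos_right h (sub_neg.2 hab)

theorem nonpos_of_hasDerivWithinAt_of_isLocalMaxOn_Icc_left {g g' : ℝ → ℝ} {a b c : ℝ}
    (hab : a < b) (hg : ∀ u ∈ Icc a b, HasDerivWithinAt g (g' u) (Icc a b) u)
    (hg' : HasDerivWithinAt g' c (Icc a b) a) (hg'a : g' a = 0)
    (hmax : IsLocalMaxOn g (Icc a b) a) : c ≤ 0 := by
  by_contra! hc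
  have hderiv_pos : ∀ᶠ u in 𝓝[Ioc a b] a, 0 < g' u := by
    have hslope := (hasDerivWithinAt_iff_tendsto_slope' left_notMem_Ioc).1
      (hg'.mono Ioc_subset_Icc_self)
    filter_upwards [hslope.eventually_const_lt hc, self_mem_nhdsWithin] with u hu hau
    rw [slope_def_field, hg'a, sub_zero] at hu
    exact (div_pos_iff_of_pos_right (sub_pos.2 hau.1)).1 hu
  have hle : ∀ᶠ u in 𝓝[Ioc a b] a, g u ≤ g a :=
    hmax.filter_mono (nhdsWithin_mono a Ioc_subset_Icc_self)
  rw [nhdsWithin_Ioc_eq_nhdsGT hab] at hderiv_pos hle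
  obtain ⟨v, hav, hv⟩ := mem_nhdsGT_iff_exists_Ioc_subset.1
    (hderiv_pos.and (hle.and (Ioc_mem_nhdsGT hab)))
  have hvb : v ≤ b := (hv ⟨hav, le_rfl⟩).2.2.2
  have hmono : StrictMonoOn g (Icc a v) := by
    refine strictMonoOn_of_hasDerivWithinAt_pos (convex_Icc a v) (f' := g')
      (fun u hu => ?_) (fun u hu => ?_) (fun u hu => ?_)
    · exact ((hg u ⟨hu.1, hu.2.trans hvb⟩).mono (Icc_subset_Icc_right hvb)).continuousWithinAt
    · have hu' := interior_subset hu
      exact (hg u ⟨hu'.1, hu'.2.trans hvb⟩).mono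
        (interior_subset.trans (Icc_subset_Icc_right hvb))
    · rw [interior_Icc] at hu
      exact (hv (Ioo_subset_Ioc_self hu)).1
  exact (hv ⟨hav, le_rfl⟩).2.1.not_gt (hmono ⟨le_rfl, hav.le⟩ ⟨hav.le, le_rfl⟩ hav)

variable {E : Type*} [NormedAddCommGroup E] [NormedSpace ℝ E]

/-- The direction `e` is feasible for `M` at `x` if a nondegenerate segment issuing from `x` in the
direction `e` lies in `M`. Unlike membership in a tangent cone, this allows second-order
expansions along the segment. -/
def IsFeasibleDirection (M : Set E) (x e : E) : Prop :=
  ∃ ε > (0 : ℝ), ∀ u ∈ Icc (0 : ℝ) ε, x + u • e ∈ M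

variable {M : Set E} {x : E}

theorem IsFeasibleDirection.mem_posTangentConeAt {e : E} (he : IsFeasibleDirection M x e) :
    e ∈ posTangentConeAt M x := by
  obtain ⟨ε, hε, hmem⟩ := he
  refine mem_posTangentConeAt_of_frequently_mem (Eventually.frequently ?_)
  filter_upwards [Ioc_mem_nhdsGT hε] with u hu using hmem u (Ioc_subset_Icc_self hu)

theorem isFeasibleDirection_of_mem_interior (hx : x ∈ interior M) (e : E) :
    IsFeasibleDirection M x e := by
  have hline : Tendsto (fun u : ℝ => x + u • e) (𝓝[≥] 0) (𝓝 x) := by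
    have hcont : Continuous fun u : ℝ => x + u • e := by fun_prop
    simpa using (hcont.tendsto 0).mono_left nhdsWithin_le_nhds
  exact mem_nhdsGE_iff_exists_Icc_subset.1 (hline (mem_interior_iff_mem_nhds.1 hx))

variable {g : E → ℝ} {g' : E → E →L[ℝ] ℝ} {g'' : E →L[ℝ] E →L[ℝ] ℝ}

theorem hessian_nonpos_of_isFeasibleDirection {e : E} (he : IsFeasibleDirection M x e)
    (hmax : IsLocalMaxOn g M x) (hg : ∀ y ∈ M, HasFDerivWithinAt g (g' y) M y)
    (hg' : HasFDerivWithinAt g' g'' M x) (hcrit : g' x e = 0) : g'' e e ≤ 0 := by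
  obtain ⟨ε, hε, hmem⟩ := he
  have hline (u : ℝ) : HasDerivWithinAt (fun u : ℝ => x + u • e) e (Icc 0 ε) u := by
    simpa using (((hasDerivAt_id u).smul_const e).const_add x).hasDerivWithinAt
  have hx : x + (0 : ℝ) • e = x := by simp
  refine nonpos_of_hasDerivWithinAt_of_isLocalMaxOn_Icc_left hε
    (g := fun u => g (x + u • e)) (g' := fun u => g' (x + u • e) e)
    (fun u hu => (hg _ (hmem u hu)).comp_hasDerivWithinAt u (hline u) hmem) ?_
    (by rw [hx, hcrit]) ?_
  · have h := (hx.symm ▸ hg').comp_hasDerivWithinAt 0 (hline 0) hmem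
    simpa using h.clm_apply (hasDerivWithinAt_const 0 (Icc 0 ε) e)
  · have htendsto : Tendsto (fun u : ℝ => x + u • e) (𝓝[Icc 0 ε] 0) (𝓝[M] x) := by
      simpa only [hx] using (hline 0).continuousWithinAt.tendsto_nhdsWithin hmem
    simpa only [IsLocalMaxOn, IsMaxFilter, hx] using htendsto.eventually hmax

theorem critical_and_hessian_nonpos_of_mem_interior (hx : x ∈ interior M)
    (hmax : IsLocalMaxOn g M x) (hg : ∀ y ∈ M, HasFDerivWithinAt g (g' y) M y)
    (hg' : HasFDerivWithinAt g' g'' M x) : g' x = 0 ∧ ∀ e, g'' e e ≤ 0 := by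
  have hMx : M ∈ 𝓝 x := mem_interior_iff_mem_nhds.1 hx
  have hcrit : g' x = 0 := (hmax.isLocalMax hMx).hasFDerivAt_eq_zero
    ((hg x (interior_subset hx)).hasFDerivAt hMx)
  exact ⟨hcrit, fun e => hessian_nonpos_of_isFeasibleDirection
    (isFeasibleDirection_of_mem_interior hx e) hmax hg hg' (by simp [hcrit])⟩

end SecondOrderConditions

section HalfSpace

variable {E : Type*} [NormedAddCommGroup E] [InnerProductSpace ℝ E] {ν : E}

theorem linearMap_eq_zero_of_nonpos_on_halfSpace (hν : ν ≠ 0) (L : E →ₗ[ℝ] ℝ)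
    (hneg : ∀ e, ⟪e, ν⟫ < 0 → L e ≤ 0) (hLν : L ν ≤ 0) : L = 0 := by
  have hle (e : E) : L e ≤ 0 := by
    -- Moving far enough along `-ν` takes `e` into the open half-space, and this only increases `L`.
    obtain ⟨s, hs0, hs⟩ : ∃ s : ℝ, 0 ≤ s ∧ ⟪e - s • ν, ν⟫ < 0 := by
      have hνν : 0 < ⟪ν, ν⟫ := real_inner_self_pos.2 hν
      refine ⟨(|⟪e, ν⟫| + 1) / ⟪ν, ν⟫, by positivity, ?_⟩
      rw [inner_sub_left, real_inner_smul_left, div_mul_cancel₀ _ hνν.ne']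
      linarith [le_abs_self ⟪e, ν⟫]
    have h := hneg _ hs
    rw [map_sub, map_smul, smul_eq_mul] at h
    linarith [mul_nonpos_of_nonneg_of_nonpos hs0 hLν]
  ext e
  have h := hle (-e)
  rw [map_neg] at h
  exact le_antisymm (hle e) (by simpa using h)

theorem apply_self_nonpos_of_nonpos_on_halfSpace (hν : ν ≠ 0) (B : E →L[ℝ] E →L[ℝ] ℝ)
    (hneg : ∀ e, ⟪e, ν⟫ < 0 → B e e ≤ 0) (e : E) : B e e ≤ 0 := by
  have hdense : Dense {e : E | ⟪ν, e⟫ ≠ 0} := by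
    refine (dense_compl_singleton (0 : ℝ)).preimage
      ((innerSL ℝ ν).isOpenMap_of_ne_zero fun h => hν ?_)
    simpa using DFunLike.congr_fun h ν
  have hclosed : IsClosed {e : E | B e e ≤ 0} := isClosed_le (by fun_prop) continuous_const
  refine hclosed.closure_subset_iff.2 (fun e he => ?_) (hdense e)
  rcases lt_or_gt_of_ne he with h | h
  · exact hneg e (by rwa [real_inner_comm])
  · simpa using hneg (-e) (by rwa [inner_neg_left, real_inner_comm, neg_lt_zero])

theorem critical_and_hessian_nonpos_of_isFeasibleDirection_halfSpace {M : Set E} {x : E}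
    {g : E → ℝ} {g' : E → E →L[ℝ] ℝ} {g'' : E →L[ℝ] E →L[ℝ] ℝ} (hx : x ∈ M) (hν : ν ≠ 0)
    (hfeas : ∀ e, ⟪e, ν⟫ < 0 → IsFeasibleDirection M x e) (hmax : IsLocalMaxOn g M x)
    (hg : ∀ y ∈ M, HasFDerivWithinAt g (g' y) M y) (hg' : HasFDerivWithinAt g' g'' M x)
    (hnormal : g' x ν ≤ 0) : g' x = 0 ∧ ∀ e, g'' e e ≤ 0 := by
  have hcrit (e : E) : g' x e = 0 := DFunLike.congr_fun
    (linearMap_eq_zero_of_nonpos_on_halfSpace hν (g' x : E →ₗ[ℝ] ℝ)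
      (fun e he => hmax.hasFDerivWithinAt_nonpos (hg x hx) (hfeas e he).mem_posTangentConeAt)
      hnormal) e
  exact ⟨ContinuousLinearMap.ext hcrit, apply_self_nonpos_of_nonpos_on_halfSpace hν g'' fun e he =>
    hessian_nonpos_of_isFeasibleDirection (hfeas e he) hmax hg hg' (hcrit e)⟩

end HalfSpace

section NearestPoint

/-- `w` is the metric projection of `v` onto `W`, as a relation: no choice of a projection map is
needed, and the vector `λ(v)` of the paper is `v - w`. -/
def IsNearestPoint {V : Type*} [PseudoMetricSpace V] (W : Set V) (v w : V) : Prop :=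
  w ∈ W ∧ dist v w = infDist v W

theorem IsNearestPoint.norm_sub {V : Type*} [SeminormedAddCommGroup V] {W : Set V} {v w : V}
    (h : IsNearestPoint W v w) : ‖v - w‖ = infDist v W := by
  rw [← dist_eq_norm, h.2]

variable {V : Type*} [NormedAddCommGroup V] [InnerProductSpace ℝ V] {W : Set V} {v w : V}

/-- The outward normal cone of `W` at `ω`: the vectors, of any length including zero, whose inner
product with points of `W` is maximal at `ω`. -/
def normalCone (W : Set V) (ω : V) : Set V :=
  {l | ∀ σ ∈ W, ⟪l, σ - ω⟫ ≤ 0}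

theorem mem_frontier_of_mem_normalCone {l : V} (hw : w ∈ W) (hl : l ∈ normalCone W w)
    (hl0 : l ≠ 0) : w ∈ frontier W := by
  refine ⟨subset_closure hw, fun hint => ?_⟩
  obtain ⟨ε, hε, hmem⟩ := isFeasibleDirection_of_mem_interior hint l
  have h := hl _ (hmem ε ⟨hε.le, le_rfl⟩)
  rw [add_sub_cancel_left, real_inner_smul_right] at h
  exact h.not_gt (mul_pos hε (real_inner_self_pos.2 hl0))

theorem exists_isNearestPoint (hne : W.Nonempty) (hW : IsComplete W) (hconv : Convex ℝ W) (v : V) :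
    ∃ w, IsNearestPoint W v w := by
  obtain ⟨w, hw, h⟩ := exists_norm_eq_iInf_of_complete_convex hne hW hconv v
  exact ⟨w, hw, by simpa only [infDist_eq_iInf, dist_eq_norm] using h⟩

namespace IsNearestPoint

theorem sub_mem_normalCone (h : IsNearestPoint W v w) (hconv : Convex ℝ W) :
    v - w ∈ normalCone W w := by
  refine (norm_eq_iInf_iff_real_inner_le_zero hconv h.1).1 ?_
  simpa only [infDist_eq_iInf, dist_eq_norm] using h.norm_sub

theorem inner_sub_le_norm_mul_infDist (h : IsNearestPoint W v w) (hconv : Convex ℝ W) (z : V) :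
    ⟪v - w, z - w⟫ ≤ ‖v - w‖ * infDist z W := by
  rcases (norm_nonneg (v - w)).eq_or_lt' with h0 | hpos
  · simp [norm_eq_zero.1 h0]
  · rw [← div_le_iff₀' hpos, le_infDist ⟨w, h.1⟩]
    intro p hp
    rw [div_le_iff₀' hpos, dist_eq_norm]
    calc ⟪v - w, z - w⟫ = ⟪v - w, z - p⟫ + ⟪v - w, p - w⟫ := by
          rw [← inner_add_right, sub_add_sub_cancel]
      _ ≤ ‖v - w‖ * ‖z - p‖ + 0 :=
          add_le_add (real_inner_le_norm _ _) (h.sub_mem_normalCone hconv p hp)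
      _ = ‖v - w‖ * ‖z - p‖ := add_zero _

theorem dist_le_dist (h : IsNearestPoint W v w) (hconv : Convex ℝ W) {v' w' : V}
    (h' : IsNearestPoint W v' w') : dist w w' ≤ dist v v' := by
  have hnormal := h.sub_mem_normalCone hconv w' h'.1
  have hnormal' := h'.sub_mem_normalCone hconv w h.1
  rw [dist_eq_norm, dist_eq_norm]
  rcases (norm_nonneg (w - w')).eq_or_lt' with h0 | hpos
  · rw [h0]
    exact norm_nonneg _
  refine le_of_mul_le_mul_right ?_ hpos
  calc
    ‖w - w'‖ * ‖w - w'‖ = ⟪v - v', w - w'⟫ + ⟪v - w, w' - w⟫ + ⟪v' - w', w - w'⟫ := by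
      rw [← real_inner_self_eq_norm_mul_norm]
      simp only [inner_sub_left, inner_sub_right]
      ring
    _ ≤ ⟪v - v', w - w'⟫ := by linarith
    _ ≤ ‖v - v'‖ * ‖w - w'‖ := real_inner_le_norm _ _

theorem isMaxOn_inner {X : Type*} {M : Set X} {F : X → V} {x : X}
    (h : IsNearestPoint W (F x) w) (hconv : Convex ℝ W)
    (hmax : IsMaxOn (fun y => infDist (F y) W) M x) : IsMaxOn (fun y => ⟪F x - w, F y⟫) M x := by
  intro y hy
  have hle : ⟪F x - w, F y - w⟫ ≤ ⟪F x - w, F x - w⟫ := calc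
    ⟪F x - w, F y - w⟫ ≤ ‖F x - w‖ * infDist (F y) W := h.inner_sub_le_norm_mul_infDist hconv _
    _ ≤ ‖F x - w‖ * ‖F x - w‖ := by
      rw [h.norm_sub]
      exact mul_le_mul_of_nonneg_left (hmax hy) infDist_nonneg
    _ = ⟪F x - w, F x - w⟫ := (real_inner_self_eq_norm_mul_norm _).symm
  rwa [inner_sub_right _ _ w, inner_sub_right _ _ w, sub_le_sub_iff_right] at hle

theorem mul_sq_norm_le_inner_deriv {c : ℝ → V} {c' : V} {K a b : ℝ} (hab : a < b)
    (h : IsNearestPoint W (c b) w) (hconv : Convex ℝ W) (hc : HasDerivWithinAt c c' (Icc a b) b)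
    (hgrowth : ∀ s ∈ Icc a b, infDist (c s) W ≤ Real.exp (K * (s - b)) * infDist (c b) W) :
    K * ‖c b - w‖ ^ 2 ≤ ⟪c b - w, c'⟫ := by
  set l := c b - w
  have hexp : HasDerivAt (fun s => ‖l‖ ^ 2 * Real.exp (K * (s - b))) (‖l‖ ^ 2 * K) b := by
    simpa using ((((hasDerivAt_id b).sub_const b).const_mul K).exp).const_mul (‖l‖ ^ 2)
  have hinner : HasDerivWithinAt (fun s => ⟪l, c s - w⟫) ⟪l, c'⟫ (Icc a b) b :=
    (innerSL ℝ l).hasFDerivAt.comp_hasDerivWithinAt b (hc.sub_const w)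
  have hmax : IsMaxOn (fun s => ⟪l, c s - w⟫ - ‖l‖ ^ 2 * Real.exp (K * (s - b))) (Icc a b) b := by
    intro s hs
    have hle : ⟪l, c s - w⟫ ≤ ‖l‖ ^ 2 * Real.exp (K * (s - b)) := calc
      ⟪l, c s - w⟫ ≤ ‖l‖ * infDist (c s) W := h.inner_sub_le_norm_mul_infDist hconv _
      _ ≤ ‖l‖ * (Real.exp (K * (s - b)) * ‖l‖) := by
        rw [h.norm_sub]
        exact mul_le_mul_of_nonneg_left (hgrowth s hs) infDist_nonneg
      _ = ‖l‖ ^ 2 * Real.exp (K * (s - b)) := by ring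
    have heq : ⟪l, c b - w⟫ - ‖l‖ ^ 2 * Real.exp (K * (b - b)) = 0 := by
      simp [l]
    exact (sub_nonpos.2 hle).trans_eq heq.symm
  linarith [nonneg_of_hasDerivWithinAt_of_isLocalMaxOn_Icc_right hab
    (hinner.sub hexp.hasDerivWithinAt) hmax.localize]

theorem inner_apply_le_mul_sq_norm {ψ : V → V} {C : ℝ} (h : IsNearestPoint W v w)
    (hconv : Convex ℝ W) (hlip : ‖ψ v - ψ w‖ ≤ C * ‖v - w‖)
    (hψ : ∀ l ∈ normalCone W w, ⟪l, ψ w⟫ ≤ 0) : ⟪v - w, ψ v⟫ ≤ C * ‖v - w‖ ^ 2 := calc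
  ⟪v - w, ψ v⟫ = ⟪v - w, ψ v - ψ w⟫ + ⟪v - w, ψ w⟫ := by rw [← inner_add_right, sub_add_cancel]
  _ ≤ ‖v - w‖ * (C * ‖v - w‖) + 0 := add_le_add
    ((real_inner_le_norm _ _).trans (mul_le_mul_of_nonneg_left hlip (norm_nonneg _)))
    (hψ _ (h.sub_mem_normalCone hconv))
  _ = C * ‖v - w‖ ^ 2 := by ring

theorem inner_forcing_pos {c : ℝ → V} {A : V} {ψ : V → V} {C K a b : ℝ} (hab : a < b)
    (h : IsNearestPoint W (c b) w) (hconv : Convex ℝ W) (hpos : 0 < infDist (c b) W) (hCK : C < K)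
    (hc : HasDerivWithinAt c (A + ψ (c b)) (Icc a b) b)
    (hgrowth : ∀ s ∈ Icc a b, infDist (c s) W ≤ Real.exp (K * (s - b)) * infDist (c b) W)
    (hlip : ‖ψ (c b) - ψ w‖ ≤ C * ‖c b - w‖)
    (hψ : ∀ ω ∈ frontier W, ∀ l ∈ normalCone W ω, ⟪l, ψ ω⟫ ≤ 0) : 0 < ⟪c b - w, A⟫ := by
  have hl : 0 < ‖c b - w‖ := h.norm_sub ▸ hpos
  have hw : w ∈ frontier W :=
    mem_frontier_of_mem_normalCone h.1 (h.sub_mem_normalCone hconv) (norm_pos_iff.1 hl)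
  have hreaction := h.inner_apply_le_mul_sq_norm hconv hlip (hψ w hw)
  have hderiv := h.mul_sq_norm_le_inner_deriv hab hconv hc hgrowth
  rw [inner_add_right] at hderiv
  have hgap : C * ‖c b - w‖ ^ 2 < K * ‖c b - w‖ ^ 2 := mul_lt_mul_of_pos_right hCK (pow_pos hl 2)
  linarith

end IsNearestPoint

theorem exists_isCompact_superset_nearestPoints (hne : W.Nonempty) (hW : IsComplete W)
    (hconv : Convex ℝ W) {K : Set V} (hK : IsCompact K) :
    ∃ U, IsCompact U ∧ K ⊆ U ∧ ∀ v ∈ K, ∀ w, IsNearestPoint W v w → w ∈ U := by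
  choose P hP using exists_isNearestPoint hne hW hconv
  have hPcont : Continuous P := LipschitzWith.continuous (K := 1) <|
    LipschitzWith.of_dist_le_mul fun v v' => by
      simpa using (hP v).dist_le_dist hconv (hP v')
  refine ⟨K ∪ P '' K, hK.union (hK.image hPcont), subset_union_left, fun v hv w hw => ?_⟩
  have hPv : P v = w := dist_le_zero.1 (by simpa using (hP v).dist_le_dist hconv hw)
  exact Or.inr ⟨v, hv, hPv⟩

end NearestPoint

theorem IsSupportingVector.inner_nonpos_of_mem_normalCone {m : ℕ}
    {W : Set (EuclideanSpace ℝ (Fin m))} {ω a : EuclideanSpace ℝ (Fin m)}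
    (ha : ∀ lam, IsSupportingVector W ω lam → ⟪lam, a⟫ ≤ 0) {l : EuclideanSpace ℝ (Fin m)}
    (hl : l ∈ normalCone W ω) : ⟪l, a⟫ ≤ 0 := by
  rcases eq_or_ne l 0 with rfl | hl0
  · simp
  have hpos : 0 < ‖l‖⁻¹ := inv_pos.2 (norm_pos_iff.2 hl0)
  have hsupp : IsSupportingVector W ω (‖l‖⁻¹ • l) := by
    refine ⟨norm_smul_inv_norm (𝕜 := ℝ) hl0, fun σ hσ => ?_⟩
    rw [real_inner_smul_left, real_inner_smul_left]
    exact mul_le_mul_of_nonneg_left (by simpa [inner_sub_right] using hl σ hσ) hpos.le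
  have h := ha _ hsupp
  rw [real_inner_smul_left] at h
  exact nonpos_of_mul_nonpos_right h hpos

section ExponentialWeight

variable {X : Type*} [TopologicalSpace X] {M : Set X} {a b : ℝ} {d : ℝ → X → ℝ}

theorem exists_mem_Ioo_pos_of_exists_mem_Icc_pos
    (hd : ContinuousOn (fun p : ℝ × X => d p.1 p.2) (Icc a b ×ˢ M)) (ha : ∀ x ∈ M, d a x ≤ 0)
    (hpos : ∃ t ∈ Icc a b, ∃ x ∈ M, 0 < d t x) : ∃ t ∈ Ioo a b, ∃ x ∈ M, 0 < d t x := by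
  obtain ⟨t, ht, x, hx, htx⟩ := hpos
  have hat : a < t := ht.1.lt_of_ne fun h => (ha x hx).not_gt (h ▸ htx)
  have hclosure : closure (Ioo a b) = Icc a b := closure_Ioo (hat.trans_le ht.2).ne
  by_contra! hle
  have hcont : ContinuousOn (fun s => d s x) (closure (Ioo a b)) :=
    hclosure ▸ hd.comp (g := fun p : ℝ × X => d p.1 p.2) (f := fun s => (s, x)) (by fun_prop)
      fun s hs => ⟨hs, hx⟩
  exact (le_on_closure (fun s hs => hle s hs x hx) hcont continuousOn_const
    (hclosure ▸ ht)).not_gt htx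

-- Maximize `exp (-K t) * d t x` only up to a `t₁ < b` with `d t₁ x₁ > 0`: this keeps the maximum
-- away from the final time `b`.
theorem exists_pos_forall_le_exp_mul (hM : IsCompact M)
    (hd : ContinuousOn (fun p : ℝ × X => d p.1 p.2) (Icc a b ×ˢ M)) (ha : ∀ x ∈ M, d a x ≤ 0)
    (hpos : ∃ t ∈ Icc a b, ∃ x ∈ M, 0 < d t x) (K : ℝ) :
    ∃ t₀ ∈ Ioo a b, ∃ x₀ ∈ M, 0 < d t₀ x₀ ∧
      ∀ s ∈ Icc a t₀, ∀ y ∈ M, d s y ≤ Real.exp (K * (s - t₀)) * d t₀ x₀ := by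
  obtain ⟨t₁, ht₁, x₁, hx₁, hpos₁⟩ := exists_mem_Ioo_pos_of_exists_mem_Icc_pos hd ha hpos
  have hsub : Icc a t₁ ×ˢ M ⊆ Icc a b ×ˢ M := prod_mono_left (Icc_subset_Icc_right ht₁.2.le)
  obtain ⟨⟨t₀, x₀⟩, ⟨ht₀, hx₀⟩, hmax⟩ := (isCompact_Icc.prod hM).exists_isMaxOn
    (f := fun p : ℝ × X => Real.exp (-(K * p.1)) * d p.1 p.2)
    ⟨(t₁, x₁), ⟨ht₁.1.le, le_rfl⟩, hx₁⟩ (ContinuousOn.mul (by fun_prop) (hd.mono hsub))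
  have hpos₀ : 0 < d t₀ x₀ := pos_of_mul_pos_right ((mul_pos (Real.exp_pos _) hpos₁).trans_le
    (hmax (show (t₁, x₁) ∈ Icc a t₁ ×ˢ M from ⟨⟨ht₁.1.le, le_rfl⟩, hx₁⟩))) (Real.exp_pos _).le
  have ht₀a : a < t₀ := ht₀.1.lt_of_ne fun h => (ha x₀ hx₀).not_gt (h ▸ hpos₀)
  refine ⟨t₀, ⟨ht₀a, ht₀.2.trans_lt ht₁.2⟩, x₀, hx₀, hpos₀, fun s hs y hy => ?_⟩
  have hle : Real.exp (-(K * s)) * d s y ≤ Real.exp (-(K * t₀)) * d t₀ x₀ :=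
    hmax (show (s, y) ∈ Icc a t₁ ×ˢ M from ⟨⟨hs.1, hs.2.trans ht₀.2⟩, hy⟩)
  calc d s y = Real.exp (K * s) * (Real.exp (-(K * s)) * d s y) := by
        rw [← mul_assoc, ← Real.exp_add, add_neg_cancel, Real.exp_zero, one_mul]
    _ ≤ Real.exp (K * s) * (Real.exp (-(K * t₀)) * d t₀ x₀) :=
        mul_le_mul_of_nonneg_left hle (Real.exp_pos _).le
    _ = Real.exp (K * (s - t₀)) * d t₀ x₀ := by
        rw [← mul_assoc, ← Real.exp_add, mul_sub, sub_eq_add_neg]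

end ExponentialWeight

/-- The maximal distance pairs of the paper: at time `t`, the point `x` realizes the supremum over
`M` of the distance to `W`, and this supremum is positive. -/
def IsMaximalDistancePair {X V : Type*} [PseudoMetricSpace V] (W : Set V) (M : Set X)
    (f : ℝ → X → V) (t : ℝ) (x : X) : Prop :=
  infDist (f t x) W = sSup ((fun y => infDist (f t y) W) '' M) ∧ 0 < infDist (f t x) W

theorem isMaximalDistancePair_of_isMaxOn {X V : Type*} [PseudoMetricSpace V] {W : Set V} {M : Set X}
    {f : ℝ → X → V} {t : ℝ} {x : X} (hx : x ∈ M)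
    (hmax : IsMaxOn (fun y => infDist (f t y) W) M x) (hpos : 0 < infDist (f t x) W) :
    IsMaximalDistancePair W M f t x :=
  ⟨by rw [sSup_image', hmax.iSup_eq hx], hpos⟩

section Parabolic

variable {E V : Type*} [NormedAddCommGroup E] [InnerProductSpace ℝ E]
  [NormedAddCommGroup V] [InnerProductSpace ℝ V]

theorem inner_sum_apply_self_add_apply_nonpos {ι : Type*} [Fintype ι] {l : V} {L : E →L[ℝ] V}
    {H : E →L[ℝ] E →L[ℝ] V} (hL : ∀ e, ⟪l, L e⟫ = 0) (hH : ∀ e, ⟪l, H e e⟫ ≤ 0)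
    (σ : ι → E) (b : E) : ⟪l, ∑ j, H (σ j) (σ j) + L b⟫ ≤ 0 := by
  rw [inner_add_right, inner_sum, hL, add_zero]
  exact Finset.sum_nonpos fun j _ => hH (σ j)

theorem hasFDerivWithinAt_inner_left (l : V) {F : E → V} {L : E →L[ℝ] V} {M : Set E} {x : E}
    (hF : HasFDerivWithinAt F L M x) :
    HasFDerivWithinAt (fun y => ⟪l, F y⟫) (innerSL ℝ l ∘L L) M x :=
  (innerSL ℝ l).hasFDerivAt.comp_hasFDerivWithinAt x hF

theorem hasFDerivWithinAt_innerSL_comp (l : V) {L : E → E →L[ℝ] V} {H : E →L[ℝ] E →L[ℝ] V}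
    {M : Set E} {x : E} (hL : HasFDerivWithinAt L H M x) :
    HasFDerivWithinAt (fun y => innerSL ℝ l ∘L L y)
      (ContinuousLinearMap.compL ℝ E V ℝ (innerSL ℝ l) ∘L H) M x :=
  (ContinuousLinearMap.compL ℝ E V ℝ (innerSL ℝ l)).hasFDerivAt.comp_hasFDerivWithinAt x hL

-- The fields `σ j` encode the second-order part: it is `∑ aₖₗ ∂ₖ∂ₗ` for the possibly degenerate
-- matrix `a = σ σᵀ`.
theorem stmt_4_general {ι : Type*} [Fintype ι] {M : Set E} (hM : IsCompact M) {T : ℝ} {W : Set V}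
    (hW : IsComplete W) (hconv : Convex ℝ W) {φ : ℝ → E → V → V}
    (hφ : ∀ U : Set V, IsCompact U → ∃ C : ℝ, ∀ t ∈ Ioo 0 T, ∀ x ∈ M, ∀ v₁ ∈ U, ∀ v₂ ∈ U,
      ‖φ t x v₁ - φ t x v₂‖ ≤ C * ‖v₁ - v₂‖)
    {σ : ι → ℝ → E → E} {b : ℝ → E → E} {f f' : ℝ → E → V} {Df : ℝ → E → E →L[ℝ] V}
    {D2f : ℝ → E → E →L[ℝ] E →L[ℝ] V}
    (hf : ContinuousOn (fun p : ℝ × E => f p.1 p.2) (Icc 0 T ×ˢ M))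
    (hft : ∀ t ∈ Ioo 0 T, ∀ x ∈ M, HasDerivAt (fun s => f s x) (f' t x) t)
    (hDf : ∀ t ∈ Ioo 0 T, ∀ x ∈ M, HasFDerivWithinAt (f t) (Df t x) M x)
    (hD2f : ∀ t ∈ Ioo 0 T, ∀ x ∈ M, HasFDerivWithinAt (Df t) (D2f t x) M x)
    (hPDE : ∀ t ∈ Ioo 0 T, ∀ x ∈ M,
      f' t x = ∑ j, D2f t x (σ j t x) (σ j t x) + Df t x (b t x) + φ t x (f t x))
    {ν : E → E} (hν : ∀ x ∈ frontier M, ν x ≠ 0)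
    (hfeas : ∀ x ∈ frontier M, ∀ e, ⟪e, ν x⟫ < 0 → IsFeasibleDirection M x e)
    (hinit : ∀ x ∈ M, f 0 x ∈ W)
    (hφW : ∀ t ∈ Ioo 0 T, ∀ x ∈ M, ∀ ω ∈ frontier W, ∀ l ∈ normalCone W ω, ⟪l, φ t x ω⟫ ≤ 0)
    (hout : ∃ t ∈ Icc 0 T, ∃ x ∈ M, f t x ∉ W) :
    ∃ t₀ ∈ Ioo 0 T, ∃ x₀ ∈ frontier M, IsMaximalDistancePair W M f t₀ x₀ ∧
      ∀ w, IsNearestPoint W (f t₀ x₀) w → 0 < ⟪f t₀ x₀ - w, Df t₀ x₀ (ν x₀)⟫ := by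
  have hne : W.Nonempty := let ⟨_, _, x, hx, _⟩ := hout; ⟨f 0 x, hinit x hx⟩
  obtain ⟨U, hU, hfU, hwU⟩ := exists_isCompact_superset_nearestPoints hne hW hconv
    ((isCompact_Icc.prod hM).image_of_continuousOn hf)
  obtain ⟨C, hC⟩ := hφ U hU
  obtain ⟨t₀, ht₀, x₀, hx₀, hpos, hgrowth⟩ := exists_pos_forall_le_exp_mul hM
    (d := fun t x => infDist (f t x) W) ((continuous_infDist_pt W).comp_continuousOn hf)
    (fun x hx => (infDist_zero_of_mem (hinit x hx)).le)
    (by simpa only [← hW.isClosed.notMem_iff_infDist_pos hne] using hout) (C + 1)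
  have hmax : IsMaxOn (fun y => infDist (f t₀ y) W) M x₀ := fun y hy => by
    simpa using hgrowth t₀ ⟨ht₀.1.le, le_rfl⟩ y hy
  have hscalar_max (w) (hw : IsNearestPoint W (f t₀ x₀) w) := (hw.isMaxOn_inner hconv hmax).localize
  have hg (l : V) := fun y hy => hasFDerivWithinAt_inner_left l (hDf t₀ ht₀ y hy)
  have hg' (l : V) := hasFDerivWithinAt_innerSL_comp l (hD2f t₀ ht₀ x₀ hx₀)
  have hfK : f t₀ x₀ ∈ (fun p : ℝ × E => f p.1 p.2) '' (Icc 0 T ×ˢ M) :=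
    ⟨(t₀, x₀), ⟨Ioo_subset_Icc_self ht₀, hx₀⟩, rfl⟩
  have hderiv : HasDerivWithinAt (fun s => f s x₀) _ (Icc 0 t₀) t₀ :=
    (hft t₀ ht₀ x₀ hx₀).hasDerivWithinAt
  rw [hPDE t₀ ht₀ x₀ hx₀] at hderiv
  have hnot_critical (w) (hw : IsNearestPoint W (f t₀ x₀) w) :
      ¬ (innerSL ℝ (f t₀ x₀ - w) ∘L Df t₀ x₀ = 0 ∧ ∀ e, ⟪f t₀ x₀ - w, D2f t₀ x₀ e e⟫ ≤ 0) := by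
    rintro ⟨hcrit, hhess⟩
    have helliptic := inner_sum_apply_self_add_apply_nonpos (DFunLike.congr_fun hcrit) hhess
      (fun j => σ j t₀ x₀) (b t₀ x₀)
    exact helliptic.not_gt <| IsNearestPoint.inner_forcing_pos (c := fun s => f s x₀)
      (ψ := φ t₀ x₀) ht₀.1 hw hconv hpos (lt_add_one C) hderiv
      (fun s hs => hgrowth s hs x₀ hx₀) (hC t₀ ht₀ x₀ hx₀ _ (hfU hfK) _ (hwU _ hfK _ hw))
      (hφW t₀ ht₀ x₀ hx₀)
  have hx₀_frontier : x₀ ∈ frontier M := by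
    obtain ⟨w, hw⟩ := exists_isNearestPoint hne hW hconv (f t₀ x₀)
    exact ⟨subset_closure hx₀, fun hint => hnot_critical w hw <|
      critical_and_hessian_nonpos_of_mem_interior hint (hscalar_max w hw) (hg _) (hg' _)⟩
  refine ⟨t₀, ht₀, x₀, hx₀_frontier, isMaximalDistancePair_of_isMaxOn hx₀ hmax hpos,
    fun w hw => ?_⟩
  by_contra! hle
  exact hnot_critical w hw (critical_and_hessian_nonpos_of_isFeasibleDirection_halfSpace hx₀
    (hν x₀ hx₀_frontier) (hfeas x₀ hx₀_frontier) (hscalar_max w hw) (hg _) (hg' _) hle)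

end Parabolic

/-- Hopf boundary point lemma for parabolic systems. -/
theorem stmt_4
    (n m : ℕ)
    -- M is the closure of a bounded domain (bounded connected open set) in ℝⁿ
    (Ω : Set (EuclideanSpace ℝ (Fin n)))
    (hΩopen : IsOpen Ω) (hΩconn : IsConnected Ω) (hΩbdd : Bornology.IsBounded Ω)
    (M : Set (EuclideanSpace ℝ (Fin n))) (hM : M = closure Ω)
    (T : ℝ) (hT : 0 < T)
    -- W is a nonempty closed convex subset of ℝᵐ
    (W : Set (EuclideanSpace ℝ (Fin m)))
    (hWne : W.Nonempty) (hWcl : IsClosed W) (hWconv : Convex ℝ W)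
    -- φ is Lipschitz in v, uniformly in (t,x), on every compact set U ⊆ ℝᵐ
    (φ : ℝ → EuclideanSpace ℝ (Fin n) → EuclideanSpace ℝ (Fin m) →
      EuclideanSpace ℝ (Fin m))
    (hφ : ∀ U : Set (EuclideanSpace ℝ (Fin m)), IsCompact U → ∃ C > (0 : ℝ),
      ∀ t ∈ Set.Ioo (0 : ℝ) T, ∀ x ∈ M, ∀ v₁ ∈ U, ∀ v₂ ∈ U,
        ‖φ t x v₁ - φ t x v₂‖ ≤ C * ‖v₁ - v₂‖)
    -- drift coefficients
    (ζ : Fin n → ℝ → EuclideanSpace ℝ (Fin n) → ℝ)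
    -- the solution f, its time derivative f', its first and second spatial
    -- derivatives (taken within M)
    (f f' : ℝ → EuclideanSpace ℝ (Fin n) → EuclideanSpace ℝ (Fin m))
    (Df : ℝ → EuclideanSpace ℝ (Fin n) →
      (EuclideanSpace ℝ (Fin n) →L[ℝ] EuclideanSpace ℝ (Fin m)))
    (D2f : ℝ → EuclideanSpace ℝ (Fin n) →
      (EuclideanSpace ℝ (Fin n) →L[ℝ]
        (EuclideanSpace ℝ (Fin n) →L[ℝ] EuclideanSpace ℝ (Fin m))))
    (hfcont : ContinuousOn (fun p : ℝ × EuclideanSpace ℝ (Fin n) => f p.1 p.2)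
      (Set.Icc 0 T ×ˢ M))
    (hft : ∀ t ∈ Set.Ioo (0 : ℝ) T, ∀ x ∈ M,
      HasDerivAt (fun s => f s x) (f' t x) t)
    (hftcont : ∀ x ∈ M, ContinuousOn (fun t => f' t x) (Set.Ioo (0 : ℝ) T))
    (hDf : ∀ t ∈ Set.Ioo (0 : ℝ) T, ∀ x ∈ M,
      HasFDerivWithinAt (f t) (Df t x) M x)
    (hD2f : ∀ t ∈ Set.Ioo (0 : ℝ) T, ∀ x ∈ M,
      HasFDerivWithinAt (Df t) (D2f t x) M x)
    -- the parabolic system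
    (hPDE : ∀ t ∈ Set.Ioo (0 : ℝ) T, ∀ x ∈ M,
      f' t x =
        (∑ j : Fin n, D2f t x (EuclideanSpace.single j 1) (EuclideanSpace.single j 1))
        + (∑ j : Fin n, ζ j t x • Df t x (EuclideanSpace.single j 1))
        + φ t x (f t x))
    -- the outward unit normal on the boundary of M
    (ν : EuclideanSpace ℝ (Fin n) → EuclideanSpace ℝ (Fin n))
    (hν1 : ∀ x ∈ frontier M, ‖ν x‖ = 1)
    (hν2 : ∀ x ∈ frontier M, ∀ e : EuclideanSpace ℝ (Fin n), ⟪e, ν x⟫ < 0 →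
      ∃ ε > (0 : ℝ), ∀ u ∈ Set.Icc (0 : ℝ) ε, x + u • e ∈ M)
    -- Requirement 1: the initial value lies in W
    (hreq1 : ∀ x ∈ M, f 0 x ∈ W)
    -- Requirement 2: φ points into W on the boundary of W
    (hreq2 : ∀ t ∈ Set.Ioo (0 : ℝ) T, ∀ x ∈ M, ∀ ω ∈ frontier W,
      ∀ lam, IsSupportingVector W ω lam → ⟪lam, φ t x ω⟫ ≤ 0)
    -- f leaves W at some time in (0,T]
    (hout : ∃ t ∈ Set.Ioc (0 : ℝ) T, ∃ x ∈ M, f t x ∉ W) :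
    -- conclusion: there is a maximal distance pair (t₀,x₀) ∈ (0,T) × ∂M with
    -- ⟪λ(f(t₀,x₀)), D_x f(t₀,x₀)[ν(x₀)]⟫ > 0
    ∃ t₀ ∈ Set.Ioo (0 : ℝ) T, ∃ x₀ ∈ frontier M,
      (Metric.infDist (f t₀ x₀) W
          = sSup ((fun y => Metric.infDist (f t₀ y) W) '' M) ∧
        0 < Metric.infDist (f t₀ x₀) W) ∧
      ∀ w ∈ W, dist (f t₀ x₀) w = Metric.infDist (f t₀ x₀) W →
        0 < ⟪f t₀ x₀ - w, Df t₀ x₀ (ν x₀)⟫ := by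
  have hcompact : IsCompact M := hM ▸ hΩbdd.isCompact_closure
  obtain ⟨t₀, ht₀, x₀, hx₀, hpair, hnormal⟩ := stmt_4_general hcompact hWcl.isComplete hWconv
    (fun U hU => (hφ U hU).imp fun _ hC => hC.2)
    (σ := fun j _ _ => EuclideanSpace.single j 1)
    (b := fun t x => ∑ j, ζ j t x • EuclideanSpace.single j 1)
    hfcont hft hDf hD2f (fun t ht x hx => by simpa only [map_sum, map_smul] using hPDE t ht x hx)
    (fun x hx => norm_ne_zero_iff.1 (by simp [hν1 x hx])) hν2 hreq1
    (fun t ht x hx ω hω _ => IsSupportingVector.inner_nonpos_of_mem_normalCone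
      (hreq2 t ht x hx ω hω))
    (hout.imp fun _ h => h.imp_left fun ht => Set.Ioc_subset_Icc_self ht)
  exact ⟨t₀, ht₀, x₀, hx₀, hpair, fun w hw hd => hnormal w ⟨hw, hd⟩⟩
end

section
/- (Maximum principle with Dirichlet-type boundary control for parabolic systems.) Assume the setting below, together with Requirement 1 and Requirement 2. If f(t,x) lies in W for all (t,x) ∈ (0,T) × ∂M, then f(t,x) lies in W for all (t,x) ∈ [0,T] × M. -/
open scoped RealInnerProductSpace

/-!
Write `d` for the distance to `W`, let `C` be a Lipschitz constant of `φ` on a compact set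
containing the values of `f` and their nearest points in `W`, and suppose that `d (f t x)` is
positive somewhere. Then `exp (-(C + 1) t) * d (f t x)` has a positive maximum over `[0, s] × M` for
some `s < T`, attained at a positive time and an interior point. There let `ω` be the point of `W`
nearest to `v = f t x` and `lam` the unit vector in the direction of `v - ω`. As `lam` supports `W`
at `ω`, the function `⟪lam, f - ω⟫` is at most `d ∘ f` everywhere, with equality at the maximum, so
`exp (-(C + 1) t) * ⟪lam, f - ω⟫` has a maximum there as well. This function is differentiable: its
first space derivatives vanish, its second ones are nonpositive, and the equation leaves
`(C + 1) * d v ≤ ⟪lam, φ v⟫`. But `⟪lam, φ ω⟫ ≤ 0` gives `⟪lam, φ v⟫ ≤ C * d v`.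
-/

open Set Filter Metric
open scoped Topology

section ConvexProjection

variable {F : Type*} [NormedAddCommGroup F] [InnerProductSpace ℝ F] {W : Set F} {v ω lam : F}

/-- The set `S_ω W` of unit vectors supporting `W` at `ω`, in an arbitrary inner product space; for
Euclidean spaces `lam ∈ supportingVectors W ω` unfolds to `IsSupportingVector W ω lam`. -/
def supportingVectors (W : Set F) (ω : F) : Set F :=
  {lam | ‖lam‖ = 1 ∧ ∀ σ ∈ W, ⟪lam, σ⟫ ≤ ⟪lam, ω⟫}

lemma mem_frontier_of_mem_supportingVectors (hω : ω ∈ W) (hlam : lam ∈ supportingVectors W ω) :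
    ω ∈ frontier W := by
  refine ⟨subset_closure hω, fun hint => ?_⟩
  have hmax : IsLocalMax (innerSL ℝ lam) ω := by
    filter_upwards [mem_interior_iff_mem_nhds.1 hint] with σ hσ using hlam.2 σ hσ
  have hzero : innerSL ℝ lam = 0 := hmax.hasFDerivAt_eq_zero (innerSL ℝ lam).hasFDerivAt
  have hone : ‖innerSL ℝ lam‖ = 1 := (innerSL_apply_norm ℝ lam).trans hlam.1
  simp [hzero] at hone

lemma inner_sub_le_infDist (hω : ω ∈ W) (hlam : lam ∈ supportingVectors W ω) (w : F) :
    ⟪lam, w - ω⟫ ≤ infDist w W := by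
  refine (le_infDist ⟨ω, hω⟩).2 fun σ hσ => ?_
  calc ⟪lam, w - ω⟫ ≤ ⟪lam, w - σ⟫ := by
        simp only [inner_sub_right]
        linarith [hlam.2 σ hσ]
    _ ≤ ‖lam‖ * ‖w - σ‖ := real_inner_le_norm _ _
    _ = dist w σ := by rw [hlam.1, one_mul, dist_eq_norm]

lemma exists_mem_supportingVectors_inner_sub_eq_norm (hne : v ≠ ω)
    (hvar : ∀ σ ∈ W, ⟪v - ω, σ - ω⟫ ≤ 0) :
    ∃ lam ∈ supportingVectors W ω, ⟪lam, v - ω⟫ = ‖v - ω‖ := by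
  have hne' : v - ω ≠ 0 := sub_ne_zero.2 hne
  refine ⟨‖v - ω‖⁻¹ • (v - ω), ⟨norm_smul_inv_norm hne', fun σ hσ => ?_⟩, ?_⟩
  · rw [← sub_nonpos, ← inner_sub_right, real_inner_smul_left]
    exact mul_nonpos_of_nonneg_of_nonpos (by positivity) (hvar σ hσ)
  · rw [real_inner_smul_left, real_inner_self_eq_norm_mul_norm,
      inv_mul_cancel_left₀ (norm_ne_zero_iff.2 hne')]

lemma norm_sub_le_norm_sub_of_inner_le_zero {v' ω' : F} (hω : ω ∈ W) (hω' : ω' ∈ W)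
    (hvar : ∀ σ ∈ W, ⟪v - ω, σ - ω⟫ ≤ 0) (hvar' : ∀ σ ∈ W, ⟪v' - ω', σ - ω'⟫ ≤ 0) :
    ‖ω - ω'‖ ≤ ‖v - v'‖ := by
  have hsq : ‖ω - ω'‖ * ‖ω - ω'‖ ≤ ‖v - v'‖ * ‖ω - ω'‖ :=
    calc ‖ω - ω'‖ * ‖ω - ω'‖
        = ⟪v - v', ω - ω'⟫ + ⟪v - ω, ω' - ω⟫ + ⟪v' - ω', ω - ω'⟫ := by
          rw [← real_inner_self_eq_norm_mul_norm]
          simp only [inner_sub_left, inner_sub_right]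
          ring
      _ ≤ ⟪v - v', ω - ω'⟫ := by linarith [hvar ω' hω', hvar' ω hω]
      _ ≤ ‖v - v'‖ * ‖ω - ω'‖ := real_inner_le_norm _ _
  rcases (norm_nonneg (ω - ω')).eq_or_lt with hzero | hpos
  · exact hzero ▸ norm_nonneg _
  · exact le_of_mul_le_mul_right hsq hpos

lemma exists_lipschitzWith_one_projection (hne : W.Nonempty) (hcompl : IsComplete W)
    (hconv : Convex ℝ W) :
    ∃ P : F → F, LipschitzWith 1 P ∧ ∀ v, P v ∈ W ∧ ∀ σ ∈ W, ⟪v - P v, σ - P v⟫ ≤ 0 := by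
  have hex : ∀ v : F, ∃ ω ∈ W, ∀ σ ∈ W, ⟪v - ω, σ - ω⟫ ≤ 0 := fun v => by
    obtain ⟨ω, hω, hmin⟩ := exists_norm_eq_iInf_of_complete_convex hne hcompl hconv v
    exact ⟨ω, hω, (norm_eq_iInf_iff_real_inner_le_zero hconv hω).1 hmin⟩
  choose P hPmem hPvar using hex
  refine ⟨P, LipschitzWith.mk_one fun v w => ?_, fun v => ⟨hPmem v, hPvar v⟩⟩
  simpa only [dist_eq_norm] using
    norm_sub_le_norm_sub_of_inner_le_zero (hPmem v) (hPmem w) (hPvar v) (hPvar w)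

end ConvexProjection

section DerivativesAtMaxima

lemma deriv_deriv_nonpos_of_isLocalMax {g : ℝ → ℝ} {u : ℝ} (hmax : IsLocalMax g u)
    (hcont : ContinuousAt g u) : deriv (deriv g) u ≤ 0 := by
  by_contra! hpos
  have hmin : IsLocalMin g u := isLocalMin_of_deriv_deriv_pos hpos hmax.deriv_eq_zero hcont
  have hconst : g =ᶠ[𝓝 u] fun _ => g u := by
    filter_upwards [hmin, hmax] with s hge hle using le_antisymm hle hge
  have hzero : deriv (deriv g) u = 0 := by simpa using hconst.deriv.deriv_eq
  exact hpos.ne' hzero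

lemma mul_le_of_isLocalMaxOn_exp_mul {u : ℝ → ℝ} {u' L t : ℝ} (hu : HasDerivAt u u' t)
    (hmax : IsLocalMaxOn (fun s => Real.exp (-L * s) * u s) (Iic t) t) : L * u t ≤ u' := by
  have hexp : HasDerivAt (fun s => Real.exp (-L * s)) (Real.exp (-L * t) * -L) t := by
    simpa using ((hasDerivAt_id t).const_mul (-L)).exp
  have hleft : (-1 : ℝ) ∈ posTangentConeAt (Iic t) t := by
    refine mem_posTangentConeAt_of_segment_subset ?_
    rw [segment_symm, segment_eq_Icc (by linarith)]
    exact Icc_subset_Iic_self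
  have hderiv := hmax.hasFDerivWithinAt_nonpos (hexp.mul hu).hasFDerivAt.hasFDerivWithinAt hleft
  have hprod : 0 ≤ Real.exp (-L * t) * (u' - L * u t) := by
    simp only [ContinuousLinearMap.toSpanSingleton_apply, smul_eq_mul] at hderiv
    linarith
  linarith [nonneg_of_mul_nonneg_right hprod (Real.exp_pos _)]

variable {E F : Type*} [NormedAddCommGroup E] [NormedSpace ℝ E] [NormedAddCommGroup F]
  [NormedSpace ℝ F]

lemma apply_second_fderiv_nonpos_of_isLocalMax {g : E → F} {Dg : E → E →L[ℝ] F}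
    {D2g : E →L[ℝ] E →L[ℝ] F} {x : E} (ℓ : F →L[ℝ] ℝ) (hmax : IsLocalMax (fun y => ℓ (g y)) x)
    (hDg : ∀ᶠ y in 𝓝 x, HasFDerivAt g (Dg y) y) (hD2g : HasFDerivAt Dg D2g x) (e : E) :
    ℓ (D2g e e) ≤ 0 := by
  let line : ℝ → E := fun u => x + u • e
  have hline : ∀ u, HasDerivAt line e u := fun u => by
    simpa [line] using ((hasDerivAt_id u).smul_const e).const_add x
  have hline0 : line 0 = x := by simp [line]
  have htendsto : Tendsto line (𝓝 0) (𝓝 x) := hline0 ▸ (hline 0).continuousAt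
  have hfirst : ∀ᶠ u in 𝓝 (0 : ℝ), HasDerivAt (fun u => ℓ (g (line u))) (ℓ (Dg (line u) e)) u := by
    filter_upwards [htendsto.eventually hDg] with u hu
    exact ℓ.hasFDerivAt.comp_hasDerivAt u (hu.comp_hasDerivAt u (hline u))
  have hsecond : HasDerivAt (fun u => ℓ (Dg (line u) e)) (ℓ (D2g e e)) 0 := by
    have hDgLine : HasDerivAt (fun u => Dg (line u)) (D2g e) 0 :=
      (hline0.symm ▸ hD2g : HasFDerivAt Dg D2g (line 0)).comp_hasDerivAt 0 (hline 0)
    simpa [Function.comp_def] using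
      ℓ.hasFDerivAt.comp_hasDerivAt 0 (hDgLine.clm_apply (hasDerivAt_const 0 e))
  have hmaxLine : IsLocalMax (fun u => ℓ (g (line u))) 0 := by
    filter_upwards [htendsto.eventually hmax] with u hu
    rwa [hline0]
  have hderiv : deriv (fun u => ℓ (g (line u))) =ᶠ[𝓝 0] fun u => ℓ (Dg (line u) e) :=
    hfirst.mono fun _ hu => hu.deriv
  rw [← hsecond.deriv, ← hderiv.deriv_eq]
  exact deriv_deriv_nonpos_of_isLocalMax hmaxLine hfirst.self_of_nhds.continuousAt

lemma apply_sum_second_fderiv_add_fderiv_nonpos_of_isLocalMax {ι : Type*} [Fintype ι] {g : E → F}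
    {Dg : E → E →L[ℝ] F} {D2g : E →L[ℝ] E →L[ℝ] F} {x : E} (ℓ : F →L[ℝ] ℝ)
    (hmax : IsLocalMax (fun y => ℓ (g y)) x) (hDg : ∀ᶠ y in 𝓝 x, HasFDerivAt g (Dg y) y)
    (hD2g : HasFDerivAt Dg D2g x) (a : ι → E) (b : E) :
    ℓ (∑ j, D2g (a j) (a j) + Dg x b) ≤ 0 := by
  have hfirst : ℓ (Dg x b) = 0 := DFunLike.congr_fun
    (hmax.hasFDerivAt_eq_zero (ℓ.hasFDerivAt.comp x hDg.self_of_nhds)) b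
  rw [map_add, map_sum, hfirst, add_zero]
  exact Finset.sum_nonpos fun j _ =>
    apply_second_fderiv_nonpos_of_isLocalMax ℓ hmax hDg hD2g (a j)

end DerivativesAtMaxima

section ParabolicMaximum

lemma exists_pos_isMaxOn_exp_mul {X : Type*} [TopologicalSpace X] {M : Set X} (hM : IsCompact M)
    {T : ℝ} (L : ℝ) {u : ℝ × X → ℝ} (hu : ContinuousOn u (Icc 0 T ×ˢ M))
    (hinit : ∀ x ∈ M, u (0, x) ≤ 0) (hbd : ∀ t ∈ Ioc 0 T, ∀ x ∈ frontier M, u (t, x) ≤ 0)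
    {p : ℝ × X} (hp : p ∈ Icc 0 T ×ˢ M) (hpos : 0 < u p) :
    ∃ t ∈ Ioc 0 T, ∃ x ∈ interior M, 0 < u (t, x) ∧
      IsMaxOn (fun q => Real.exp (-L * q.1) * u q) (Icc 0 T ×ˢ M) (t, x) := by
  have hcont : ContinuousOn (fun q : ℝ × X => Real.exp (-L * q.1) * u q) (Icc 0 T ×ˢ M) :=
    ContinuousOn.mul (by fun_prop) hu
  obtain ⟨⟨t, x⟩, ⟨ht, hx⟩, hmax⟩ := (isCompact_Icc.prod hM).exists_isMaxOn ⟨p, hp⟩ hcont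
  have hpos' : 0 < u (t, x) :=
    pos_of_mul_pos_right ((mul_pos (Real.exp_pos _) hpos).trans_le (hmax hp)) (Real.exp_pos _).le
  have ht0 : t ≠ 0 := by
    rintro rfl
    exact hpos'.not_ge (hinit x hx)
  have ht' : t ∈ Ioc 0 T := ⟨ht.1.lt_of_ne' ht0, ht.2⟩
  have hx' : x ∈ interior M := by
    by_contra hxint
    exact hpos'.not_ge (hbd t ht' x ⟨subset_closure hx, hxint⟩)
  exact ⟨t, ht', x, hx', hpos', hmax⟩

variable {E F ι : Type*} [NormedAddCommGroup E] [NormedSpace ℝ E] [NormedAddCommGroup F]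
  [Fintype ι] {M : Set E} {T t L : ℝ} {x : E} {f : ℝ → E → F} {f' r : F}

lemma mul_le_apply_reaction_of_isMaxOn_exp_mul [NormedSpace ℝ F] {Df : E → E →L[ℝ] F}
    {D2f : E →L[ℝ] E →L[ℝ] F} {a : ι → E} {b : E}
    (ht : t ∈ Ioc 0 T) (hx : x ∈ interior M)
    (hft : HasDerivAt (fun s => f s x) f' t) (hDf : ∀ y ∈ interior M, HasFDerivAt (f t) (Df y) y)
    (hD2f : HasFDerivAt Df D2f x) (hPDE : f' = ∑ j, D2f (a j) (a j) + Df x b + r)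
    (ℓ : F →L[ℝ] ℝ) (c : ℝ)
    (hmax : IsMaxOn (fun p : ℝ × E => Real.exp (-L * p.1) * (ℓ (f p.1 p.2) - c))
      (Icc 0 T ×ˢ M) (t, x)) :
    L * (ℓ (f t x) - c) ≤ ℓ r := by
  have hspace : IsLocalMax (fun y => ℓ (f t y)) x := by
    filter_upwards [mem_interior_iff_mem_nhds.1 hx] with y hy
    have hle := le_of_mul_le_mul_left (hmax (show (t, y) ∈ Icc 0 T ×ˢ M from
      ⟨Ioc_subset_Icc_self ht, hy⟩)) (Real.exp_pos _)
    linarith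
  have htime : IsLocalMaxOn (fun s => Real.exp (-L * s) * (ℓ (f s x) - c)) (Iic t) t := by
    filter_upwards [Ioc_mem_nhdsLE ht.1] with s hs
    exact hmax (show (s, x) ∈ Icc 0 T ×ˢ M from
      ⟨⟨hs.1.le, hs.2.trans ht.2⟩, interior_subset hx⟩)
  have hgrowth : L * (ℓ (f t x) - c) ≤ ℓ f' :=
    mul_le_of_isLocalMaxOn_exp_mul (u := fun s => ℓ (f s x) - c)
      ((ℓ.hasFDerivAt.comp_hasDerivAt t hft).sub_const c) htime
  have helliptic : ℓ (∑ j, D2f (a j) (a j) + Df x b) ≤ 0 :=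
    apply_sum_second_fderiv_add_fderiv_nonpos_of_isLocalMax ℓ hspace
      (mem_of_superset (isOpen_interior.mem_nhds hx) hDf) hD2f a b
  rw [hPDE, map_add] at hgrowth
  linarith

variable [InnerProductSpace ℝ F] {W : Set F}

lemma isMaxOn_mul_inner_of_isMaxOn_mul_infDist {X : Type*} {w : X → ℝ} {g : X → F} {S : Set X}
    {p : X} {ω lam : F} (hw : ∀ q, 0 ≤ w q) (hω : ω ∈ W) (hlam : lam ∈ supportingVectors W ω)
    (htouch : infDist (g p) W ≤ ⟪lam, g p - ω⟫)
    (hmax : IsMaxOn (fun q => w q * infDist (g q) W) S p) :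
    IsMaxOn (fun q => w q * (⟪lam, g q⟫ - ⟪lam, ω⟫)) S p := by
  intro q hq
  simp only [mem_ofPred_eq, ← inner_sub_right]
  calc w q * ⟪lam, g q - ω⟫
      ≤ w q * infDist (g q) W := mul_le_mul_of_nonneg_left (inner_sub_le_infDist hω hlam _) (hw q)
    _ ≤ w p * infDist (g p) W := hmax hq
    _ ≤ w p * ⟪lam, g p - ω⟫ := mul_le_mul_of_nonneg_left htouch (hw p)

lemma inner_le_of_norm_sub_le {lam r₀ : F} {c : ℝ} (hlam : ‖lam‖ = 1) (hr₀ : ⟪lam, r₀⟫ ≤ 0)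
    (hr : ‖r - r₀‖ ≤ c) : ⟪lam, r⟫ ≤ c :=
  calc ⟪lam, r⟫ ≤ ⟪lam, r - r₀⟫ := by rw [inner_sub_right]; linarith
    _ ≤ ‖r - r₀‖ := by simpa only [hlam, one_mul] using real_inner_le_norm lam (r - r₀)
    _ ≤ c := hr

lemma not_isMaxOn_exp_mul_infDist {Df : E → E →L[ℝ] F} {D2f : E →L[ℝ] E →L[ℝ] F} {a : ι → E}
    {b : E} {ω r₀ : F} {C : ℝ}
    (ht : t ∈ Ioc 0 T) (hx : x ∈ interior M)
    (hft : HasDerivAt (fun s => f s x) f' t) (hDf : ∀ y ∈ interior M, HasFDerivAt (f t) (Df y) y)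
    (hD2f : HasFDerivAt Df D2f x) (hPDE : f' = ∑ j, D2f (a j) (a j) + Df x b + r)
    (hω : ω ∈ W) (hvar : ∀ σ ∈ W, ⟪f t x - ω, σ - ω⟫ ≤ 0) (hnot : f t x ∉ W)
    (hr₀ : ∀ lam ∈ supportingVectors W ω, ⟪lam, r₀⟫ ≤ 0) (hlip : ‖r - r₀‖ ≤ C * ‖f t x - ω‖)
    (hCL : C < L) :
    ¬ IsMaxOn (fun p : ℝ × E => Real.exp (-L * p.1) * infDist (f p.1 p.2) W)
      (Icc 0 T ×ˢ M) (t, x) := by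
  intro hmax
  have hne : f t x ≠ ω := fun heq => hnot (heq ▸ hω)
  obtain ⟨lam, hlam, hinner⟩ := exists_mem_supportingVectors_inner_sub_eq_norm hne hvar
  have htouch : infDist (f t x) W ≤ ⟪lam, f t x - ω⟫ := by
    rw [hinner, ← dist_eq_norm]
    exact infDist_le_dist_of_mem hω
  have hmaxInner : IsMaxOn (fun p : ℝ × E =>
      Real.exp (-L * p.1) * (⟪lam, f p.1 p.2⟫ - ⟪lam, ω⟫)) (Icc 0 T ×ˢ M) (t, x) :=
    isMaxOn_mul_inner_of_isMaxOn_mul_infDist (fun _ => (Real.exp_pos _).le) hω hlam htouch hmax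
  have hlower : L * ‖f t x - ω‖ ≤ ⟪lam, r⟫ := by
    rw [← hinner, inner_sub_right]
    exact mul_le_apply_reaction_of_isMaxOn_exp_mul ht hx hft hDf hD2f hPDE (innerSL ℝ lam) _
      hmaxInner
  have hupper : ⟪lam, r⟫ ≤ C * ‖f t x - ω‖ := inner_le_of_norm_sub_le hlam.1 (hr₀ lam hlam) hlip
  have hpos : 0 < ‖f t x - ω‖ := norm_pos_iff.2 (sub_ne_zero.2 hne)
  exact (mul_lt_mul_of_pos_right hCL hpos).not_ge (hlower.trans hupper)

end ParabolicMaximum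

section MaximumPrinciple

lemma mapsTo_Icc_of_mapsTo_Ico {R X : Type*} [LinearOrder R] [DenselyOrdered R]
    [TopologicalSpace R] [OrderTopology R] [TopologicalSpace X] {W : Set X} (hW : IsClosed W)
    {g : R → X} {a b : R} (hg : ContinuousOn g (Icc a b)) (ha : g a ∈ W)
    (hmaps : MapsTo g (Ico a b) W) : MapsTo g (Icc a b) W := by
  rcases eq_or_ne a b with rfl | hne
  · simpa only [Icc_self, mapsTo_singleton] using ha
  · rw [← closure_Ico hne] at hg ⊢
    simpa only [hW.closure_eq] using hmaps.closure_of_continuousOn hg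

variable {E F : Type*} [NormedAddCommGroup E] [NormedSpace ℝ E] [NormedAddCommGroup F]
  [InnerProductSpace ℝ F] {ι : Type*} [Fintype ι]

theorem stmt_5_general {M : Set E} (hM : IsCompact M) {T : ℝ}
    {W : Set F} (hWcompl : IsComplete W) (hWconv : Convex ℝ W)
    {φ : ℝ → E → F → F}
    (hφ : ∀ U : Set F, IsCompact U → ∃ C : ℝ, ∀ t ∈ Ioo 0 T, ∀ x ∈ interior M,
      ∀ v₁ ∈ U, ∀ v₂ ∈ U, ‖φ t x v₁ - φ t x v₂‖ ≤ C * ‖v₁ - v₂‖)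
    {a : ι → ℝ → E → E} {b : ℝ → E → E}
    {f f' : ℝ → E → F} {Df : ℝ → E → E →L[ℝ] F} {D2f : ℝ → E → E →L[ℝ] E →L[ℝ] F}
    (hfcont : ContinuousOn (fun p : ℝ × E => f p.1 p.2) (Icc 0 T ×ˢ M))
    (hft : ∀ t ∈ Ioo 0 T, ∀ x ∈ interior M, HasDerivAt (fun s => f s x) (f' t x) t)
    (hDf : ∀ t ∈ Ioo 0 T, ∀ x ∈ interior M, HasFDerivAt (f t) (Df t x) x)
    (hD2f : ∀ t ∈ Ioo 0 T, ∀ x ∈ interior M, HasFDerivAt (Df t) (D2f t x) x)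
    (hPDE : ∀ t ∈ Ioo 0 T, ∀ x ∈ interior M,
      f' t x = ∑ j, D2f t x (a j t x) (a j t x) + Df t x (b t x) + φ t x (f t x))
    (hinit : ∀ x ∈ M, f 0 x ∈ W)
    (hinward : ∀ t ∈ Ioo 0 T, ∀ x ∈ interior M, ∀ ω ∈ frontier W,
      ∀ lam ∈ supportingVectors W ω, ⟪lam, φ t x ω⟫ ≤ 0)
    (hbd : ∀ t ∈ Ioo 0 T, ∀ x ∈ frontier M, f t x ∈ W) :
    ∀ t ∈ Icc 0 T, ∀ x ∈ M, f t x ∈ W := by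
  have hWcl : IsClosed W := hWcompl.isClosed
  have hbefore : ∀ s ∈ Ico 0 T, ∀ x ∈ M, f s x ∈ W := by
    intro s hs x hx
    have hWne : W.Nonempty := ⟨f 0 x, hinit x hx⟩
    obtain ⟨P, hPlip, hP⟩ := exists_lipschitzWith_one_projection hWne hWcompl hWconv
    let K : Set F := (fun p : ℝ × E => f p.1 p.2) '' (Icc 0 T ×ˢ M)
    have hK : IsCompact K := (isCompact_Icc.prod hM).image_of_continuousOn hfcont
    obtain ⟨C, hC⟩ := hφ (K ∪ P '' K) (hK.union (hK.image hPlip.continuous))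
    by_contra hnot
    obtain ⟨t, ht, y, hy, hpos, hmax⟩ := exists_pos_isMaxOn_exp_mul hM (C + 1)
      (u := fun p : ℝ × E => infDist (f p.1 p.2) W) (p := (s, x))
      ((continuous_infDist_pt W).comp_continuousOn
        (hfcont.mono (prod_mono_left (Icc_subset_Icc_right hs.2.le))))
      (fun x hx => (infDist_zero_of_mem (hinit x hx)).le)
      (fun t ht x hx => (infDist_zero_of_mem (hbd t ⟨ht.1, ht.2.trans_lt hs.2⟩ x hx)).le)
      ⟨⟨hs.1, le_rfl⟩, hx⟩ ((hWcl.notMem_iff_infDist_pos hWne).1 hnot)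
    have htT : t ∈ Ioo 0 T := ⟨ht.1, ht.2.trans_lt hs.2⟩
    have hvK : f t y ∈ K :=
      ⟨(t, y), ⟨Ioo_subset_Icc_self htT, interior_subset hy⟩, rfl⟩
    obtain ⟨hPmem, hPvar⟩ := hP (f t y)
    exact not_isMaxOn_exp_mul_infDist ht hy (hft t htT y hy) (hDf t htT) (hD2f t htT y hy)
      (hPDE t htT y hy) hPmem hPvar ((hWcl.notMem_iff_infDist_pos hWne).2 hpos)
      (fun lam hlam => hinward t htT y hy _ (mem_frontier_of_mem_supportingVectors hPmem hlam)
        lam hlam)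
      (hC t htT y hy _ (.inl hvK) _ (.inr (mem_image_of_mem P hvK))) (lt_add_one C) hmax
  exact fun t ht x hx => mapsTo_Icc_of_mapsTo_Ico (g := fun s => f s x) hWcl
    (hfcont.comp (f := fun s : ℝ => (s, x)) (by fun_prop) fun s hs => ⟨hs, hx⟩) (hinit x hx)
    (fun s hs => hbefore s hs x hx) ht

end MaximumPrinciple

/-- Maximum principle with Dirichlet-type boundary control for parabolic systems. -/
theorem stmt_5
    (n m : ℕ)
    -- M is the closure of a bounded domain (bounded connected open set) in ℝⁿ
    (Ω : Set (EuclideanSpace ℝ (Fin n)))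
    (hΩopen : IsOpen Ω) (hΩconn : IsConnected Ω) (hΩbdd : Bornology.IsBounded Ω)
    (M : Set (EuclideanSpace ℝ (Fin n))) (hM : M = closure Ω)
    (T : ℝ) (hT : 0 < T)
    -- W is a nonempty closed convex subset of ℝᵐ
    (W : Set (EuclideanSpace ℝ (Fin m)))
    (hWne : W.Nonempty) (hWcl : IsClosed W) (hWconv : Convex ℝ W)
    -- φ is Lipschitz in v, uniformly in (t,x), on every compact set U ⊆ ℝᵐ
    (φ : ℝ → EuclideanSpace ℝ (Fin n) → EuclideanSpace ℝ (Fin m) →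
      EuclideanSpace ℝ (Fin m))
    (hφ : ∀ U : Set (EuclideanSpace ℝ (Fin m)), IsCompact U → ∃ C > (0 : ℝ),
      ∀ t ∈ Set.Ioo (0 : ℝ) T, ∀ x ∈ M, ∀ v₁ ∈ U, ∀ v₂ ∈ U,
        ‖φ t x v₁ - φ t x v₂‖ ≤ C * ‖v₁ - v₂‖)
    -- drift coefficients
    (ζ : Fin n → ℝ → EuclideanSpace ℝ (Fin n) → ℝ)
    -- the solution f, its time derivative f', its first and second spatial
    -- derivatives (taken within M)
    (f f' : ℝ → EuclideanSpace ℝ (Fin n) → EuclideanSpace ℝ (Fin m))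
    (Df : ℝ → EuclideanSpace ℝ (Fin n) →
      (EuclideanSpace ℝ (Fin n) →L[ℝ] EuclideanSpace ℝ (Fin m)))
    (D2f : ℝ → EuclideanSpace ℝ (Fin n) →
      (EuclideanSpace ℝ (Fin n) →L[ℝ]
        (EuclideanSpace ℝ (Fin n) →L[ℝ] EuclideanSpace ℝ (Fin m))))
    (hfcont : ContinuousOn (fun p : ℝ × EuclideanSpace ℝ (Fin n) => f p.1 p.2)
      (Set.Icc 0 T ×ˢ M))
    (hft : ∀ t ∈ Set.Ioo (0 : ℝ) T, ∀ x ∈ M,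
      HasDerivAt (fun s => f s x) (f' t x) t)
    (hftcont : ∀ x ∈ M, ContinuousOn (fun t => f' t x) (Set.Ioo (0 : ℝ) T))
    (hDf : ∀ t ∈ Set.Ioo (0 : ℝ) T, ∀ x ∈ M,
      HasFDerivWithinAt (f t) (Df t x) M x)
    (hD2f : ∀ t ∈ Set.Ioo (0 : ℝ) T, ∀ x ∈ M,
      HasFDerivWithinAt (Df t) (D2f t x) M x)
    -- the parabolic system
    (hPDE : ∀ t ∈ Set.Ioo (0 : ℝ) T, ∀ x ∈ M,
      f' t x =
        (∑ j : Fin n, D2f t x (EuclideanSpace.single j 1) (EuclideanSpace.single j 1))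
        + (∑ j : Fin n, ζ j t x • Df t x (EuclideanSpace.single j 1))
        + φ t x (f t x))
    -- the outward unit normal on the boundary of M
    (ν : EuclideanSpace ℝ (Fin n) → EuclideanSpace ℝ (Fin n))
    (hν1 : ∀ x ∈ frontier M, ‖ν x‖ = 1)
    (hν2 : ∀ x ∈ frontier M, ∀ e : EuclideanSpace ℝ (Fin n), ⟪e, ν x⟫ < 0 →
      ∃ ε > (0 : ℝ), ∀ u ∈ Set.Icc (0 : ℝ) ε, x + u • e ∈ M)
    -- Requirement 1: the initial value lies in W
    (hreq1 : ∀ x ∈ M, f 0 x ∈ W)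
    -- Requirement 2: φ points into W on the boundary of W
    (hreq2 : ∀ t ∈ Set.Ioo (0 : ℝ) T, ∀ x ∈ M, ∀ ω ∈ frontier W,
      ∀ lam, IsSupportingVector W ω lam → ⟪lam, φ t x ω⟫ ≤ 0)
    -- Dirichlet-type boundary control: f lies in W on (0,T) × ∂M
    (hbd : ∀ t ∈ Set.Ioo (0 : ℝ) T, ∀ x ∈ frontier M, f t x ∈ W) :
    -- conclusion: f lies in W everywhere on [0,T] × M
    ∀ t ∈ Set.Icc (0 : ℝ) T, ∀ x ∈ M, f t x ∈ W :=
  stmt_5_general (hM ▸ hΩbdd.isCompact_closure) hWcl.isComplete hWconv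
    (a := fun j _ _ => EuclideanSpace.single j 1)
    (b := fun t x => ∑ j, ζ j t x • EuclideanSpace.single j 1)
    (fun U hU => (hφ U hU).imp fun C hC t ht x hx => hC.2 t ht x (interior_subset hx))
    hfcont (fun t ht x hx => hft t ht x (interior_subset hx))
    (fun t ht x hx => (hDf t ht x (interior_subset hx)).hasFDerivAt
      (mem_interior_iff_mem_nhds.1 hx))
    (fun t ht x hx => (hD2f t ht x (interior_subset hx)).hasFDerivAt
      (mem_interior_iff_mem_nhds.1 hx))
    (fun t ht x hx => by simpa only [map_sum, map_smul] using hPDE t ht x (interior_subset hx))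
    hreq1 (fun t ht x hx => hreq2 t ht x (interior_subset hx)) hbd
end

section
/- Let W be a nonempty closed convex subset of ℝᵐ, let v ∈ ℝᵐ lie outside of W, let ω ∈ ∂W, and let λ ∈ S_ω W be a supporting vector for W at ω. If ⟨λ, v − ω⟩ = dist_W v, where dist_W v is the Euclidean distance from v to W, then λ = λ(v)/‖λ(v)‖, where λ(v) = v − ω(v) and ω(v) is the metric projection of v onto W; in particular λ is a supporting vector for W at ω(v). -/
open scoped RealInnerProductSpace

/-! Let `d = ‖v - ωv‖` be the distance from `v` to `W`. The chain
`d ≤ ⟪lam, v - ω⟫ ≤ ⟪lam, v - ωv⟫ ≤ ‖v - ωv‖ = d` closes up, so both support and Cauchy-Schwarz hold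
with equality: the first puts `ωv` on the supporting hyperplane through `ω`, the second forces `lam`
to be the direction of `v - ωv`. -/

theorem infDist_eq_dist_of_forall_dist_le {X : Type*} [PseudoMetricSpace X] {s : Set X} {x y : X}
    (hy : y ∈ s) (hmin : ∀ z ∈ s, dist x y ≤ dist x z) : Metric.infDist x s = dist x y :=
  (Metric.infDist_le_dist_of_mem hy).antisymm ((Metric.le_infDist ⟨y, hy⟩).2 hmin)

section InnerProductSpace

variable {E : Type*} [NormedAddCommGroup E] [InnerProductSpace ℝ E]

theorem inner_le_norm_of_norm_le_one {x : E} (hx : ‖x‖ ≤ 1) (y : E) : ⟪x, y⟫ ≤ ‖y‖ :=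
  (real_inner_le_norm x y).trans (mul_le_of_le_one_left (norm_nonneg y) hx)

theorem eq_inv_norm_smul_of_norm_le_inner {x y : E} (hx : ‖x‖ ≤ 1) (hy : y ≠ 0)
    (hxy : ‖y‖ ≤ ⟪x, y⟫) : x = ‖y‖⁻¹ • y := by
  have hx_one : ‖x‖ = 1 :=
    hx.antisymm <| le_of_mul_le_mul_right
      (by simpa only [one_mul] using hxy.trans (real_inner_le_norm x y)) (norm_pos_iff.2 hy)
  have hinner : ⟪x, y⟫ = ‖x‖ * ‖y‖ := by
    rw [hx_one, one_mul]
    exact (inner_le_norm_of_norm_le_one hx y).antisymm hxy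
  rw [eq_inv_smul_iff₀ (norm_ne_zero_iff.2 hy), inner_eq_norm_mul_iff_real.1 hinner, hx_one,
    one_smul]

theorem stmt_10_general {W : Set E} {v ω lam ωv : E} (hv : v ∉ W) (hlam : ‖lam‖ ≤ 1)
    (hsupp : ∀ σ ∈ W, ⟪lam, σ⟫ ≤ ⟪lam, ω⟫) (hdist : Metric.infDist v W ≤ ⟪lam, v - ω⟫)
    (hωv : ωv ∈ W) (hclosest : ∀ w ∈ W, dist v ωv ≤ dist v w) :
    lam = ‖v - ωv‖⁻¹ • (v - ωv) ∧ ∀ σ ∈ W, ⟪lam, σ⟫ ≤ ⟪lam, ωv⟫ := by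
  have hnorm : ‖v - ωv‖ ≤ ⟪lam, v - ω⟫ := by
    rwa [← dist_eq_norm, ← infDist_eq_dist_of_forall_dist_le hωv hclosest]
  have hle_inner : ⟪lam, v - ω⟫ ≤ ⟪lam, v - ωv⟫ := by
    simpa only [inner_sub_right] using sub_le_sub_left (hsupp ωv hωv) ⟪lam, v⟫
  have hinner_le : ⟪lam, v - ωv⟫ ≤ ⟪lam, v - ω⟫ :=
    (inner_le_norm_of_norm_le_one hlam _).trans hnorm
  have hsub_ne : v - ωv ≠ 0 := sub_ne_zero.2 (ne_of_mem_of_not_mem hωv hv).symm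
  refine ⟨eq_inv_norm_smul_of_norm_le_inner hlam hsub_ne (hnorm.trans hle_inner),
    fun σ hσ => (hsupp σ hσ).trans ?_⟩
  simpa only [inner_sub_right, sub_le_sub_iff_left] using hinner_le

end InnerProductSpace

theorem stmt_10 (m : ℕ) (W : Set (EuclideanSpace ℝ (Fin m)))
    (hWne : W.Nonempty) (hWcl : IsClosed W) (hWconv : Convex ℝ W)
    (v : EuclideanSpace ℝ (Fin m)) (hv : v ∉ W)
    (ω : EuclideanSpace ℝ (Fin m)) (hω : ω ∈ frontier W)
    (lam : EuclideanSpace ℝ (Fin m)) (hlam : IsSupportingVector W ω lam)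
    (heq : ⟪lam, v - ω⟫ = Metric.infDist v W)
    (ωv : EuclideanSpace ℝ (Fin m)) (hωv : ωv ∈ W)
    (hclosest : ∀ w ∈ W, dist v ωv ≤ dist v w) :
    lam = ‖v - ωv‖⁻¹ • (v - ωv) ∧ IsSupportingVector W ωv lam := by
  obtain ⟨hdir, hsupp⟩ := stmt_10_general hv hlam.1.le hlam.2 heq.ge hωv hclosest
  exact ⟨hdir, hlam.1, hsupp⟩
end
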